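/- Let G be a connected bipartite graph with color classes E and V and edge set A ⊆ E × V. Then any two triangulations of the root polytope Q_G have the same f-vector: if T₁ and T₂ are triangulations of Q_G, then for every natural number k, the number of forests F ⊆ A with |F| = k + 1 that are contained in some spanning tree belonging to T₁ equals the number of forests F ⊆ A with |F| = k + 1 that are contained in some spanning tree belonging to T₂. -/

import Mathlib

/-!
The triangulation is counted through the Ehrhart function of the root polytope `Q`, for `n ≥ 1`,

  `n ↦ #(n Q ∩ ℤ^(E ⊔ V))`,

which does not refer to the triangulation. The simplices spanned by forests are unimodular
(`coeff_mem_of_isAcyclic`): deleting an edge `p` of a forest disconnects its endpoints, and the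
signed sum of coordinates over one side (plus on `E`, minus on `V`) recovers the coefficient of `p`.
Hence a lattice point of `n Q`, which lies in `n σ_Γ` for some tree `Γ` of the triangulation, has
natural number coefficients on `Γ` summing to `n`; since the simplices meet along common faces,
these coefficients do not depend on `Γ`. So the lattice points of `n Q` correspond to the functions
`c : E × V → ℕ` of total weight `n` whose support is a face of the triangulation
(`card_weights_eq_ncard_latticePts`).

Grouping the weights `c` by support, a face with `m` edges contributes the number of compositions
of `n` into `m` positive parts. This number vanishes for `m > n` and is `1` for `m = n`, so
the Ehrhart function determines the number of faces of each size by a triangular system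
(`card_eq_of_card_weights_eq`). Every subset of a spanning tree is a forest contained in `A`, so
these face numbers are the ones in the theorem.
-/

/-- The point 𝐞 + 𝐯 of ℝ^E ⊕ ℝ^V associated to an edge (e,v) of a bipartite graph. -/
noncomputable def pt {E V : Type*} [Fintype E] [Fintype V] [DecidableEq E] [DecidableEq V]
    (p : E × V) : EuclideanSpace ℝ (E ⊕ V) :=
  EuclideanSpace.single (Sum.inl p.1) (1 : ℝ) + EuclideanSpace.single (Sum.inr p.2) (1 : ℝ)

/-- The simple graph on the vertex set `E ⊔ V` whose edges are the pairs in `F`. -/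
def graphOf {E V : Type*} (F : Set (E × V)) : SimpleGraph (E ⊕ V) :=
  SimpleGraph.fromRel fun x y => ∃ p ∈ F, x = Sum.inl p.1 ∧ y = Sum.inr p.2

/-- `T` is a triangulation of the root polytope `Q_G` of the bipartite graph with edge set
`A`: a finite set of spanning trees of `G` whose simplices cover `Q_G` and pairwise
intersect in common faces. -/
def IsTriangulation {E V : Type*} [Fintype E] [Fintype V] [DecidableEq E] [DecidableEq V]
    (A : Finset (E × V)) (T : Finset (Finset (E × V))) : Prop :=
  (∀ Γ ∈ T, Γ ⊆ A ∧ (graphOf (↑Γ : Set (E × V))).IsTree) ∧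
  (convexHull ℝ (pt '' (↑A : Set (E × V))) = ⋃ Γ ∈ T, convexHull ℝ (pt '' (↑Γ : Set (E × V)))) ∧
  (∀ Γ₁ ∈ T, ∀ Γ₂ ∈ T,
    convexHull ℝ (pt '' (↑Γ₁ : Set (E × V))) ∩ convexHull ℝ (pt '' (↑Γ₂ : Set (E × V)))
      = convexHull ℝ (pt '' (↑(Γ₁ ∩ Γ₂) : Set (E × V))))

open Finset

/-! ### Counting compositions and inverting the count -/

/-- The number of compositions of `n` into positive parts indexed by `F`. For `1 ≤ #F ≤ n` it is
`(n - 1).choose (#F - 1)`; the `multichoose` form is also correct for `F = ∅`. -/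
theorem card_support_eq_fiber {α : Type*} [Fintype α] [DecidableEq α] (F : Finset α) (n : ℕ) :
    #{c ∈ (univ : Finset α).finsuppAntidiag n | c.support = F} =
      if #F ≤ n then (#F).multichoose (n - #F) else 0 := by
  split_ifs with h
  · rw [← card_finsuppAntidiag_nat_eq_multichoose]
    -- Subtracting one from each coefficient on `F` turns positive coefficients into arbitrary ones.
    set u : α →₀ ℕ := Finsupp.indicator F fun _ _ => 1 with hu
    have hua (a : α) : u a = if a ∈ F then 1 else 0 := by
      simp [hu, Finsupp.indicator_apply]
    have husum : ∑ a, u a = #F := by simp [hua]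
    refine card_bij' (fun c _ => c - u) (fun c _ => c + u) ?_ ?_ ?_ ?_
    · intro c hc
      simp only [mem_filter, mem_finsuppAntidiag, subset_univ, and_true] at hc
      obtain ⟨hc, rfl⟩ := hc
      have hle (a : α) : u a ≤ c a := by
        rw [hua]; split_ifs with ha
        · exact Nat.one_le_iff_ne_zero.2 (Finsupp.mem_support_iff.1 ha)
        · exact Nat.zero_le _
      have hsub : (c - u).support ⊆ c.support := by
        intro a; simp only [Finsupp.mem_support_iff, Finsupp.tsub_apply]; omega
      rw [mem_finsuppAntidiag]
      refine ⟨?_, hsub⟩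
      rw [sum_subset (subset_univ _) (by
        intro a _ ha; by_contra h'; exact ha (hsub (Finsupp.mem_support_iff.2 h')))]
      have : ∑ a, (c - u) a + ∑ a, u a = ∑ a, c a := by
        rw [← sum_add_distrib]
        exact sum_congr rfl fun a _ => by
          rw [Finsupp.tsub_apply]; exact Nat.sub_add_cancel (hle a)
      have hc' : ∑ a, c a = n := hc
      change ∑ a, (c - u) a = _
      omega
    · intro c hc
      rw [mem_finsuppAntidiag] at hc
      have hc1 : ∑ a, c a = n - #F := by
        rw [← hc.1]; symm
        refine sum_subset (subset_univ _) ?_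
        intro a _ ha; by_contra h'; exact ha (hc.2 (Finsupp.mem_support_iff.2 h'))
      simp only [mem_filter, mem_finsuppAntidiag, subset_univ, and_true]
      refine ⟨?_, ?_⟩
      · change ∑ a, (c + u) a = n
        simp only [Finsupp.add_apply, sum_add_distrib]; omega
      · ext a
        have : a ∉ F → c a = 0 := fun ha => by
          by_contra h'; exact ha (hc.2 (Finsupp.mem_support_iff.2 h'))
        rw [Finsupp.mem_support_iff, Finsupp.add_apply, hua]
        split_ifs with ha
        · simp [ha]
        · simp [ha, this ha]
    · intro c hc
      simp only [mem_filter, mem_finsuppAntidiag, subset_univ, and_true] at hc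
      obtain ⟨hc, rfl⟩ := hc
      ext a
      simp only [Finsupp.add_apply, Finsupp.tsub_apply, hua]
      have := @Finsupp.mem_support_iff _ _ _ c a
      split_ifs <;> grind
    · intro c hc
      simp
  · rw [card_eq_zero, filter_eq_empty_iff]
    rintro c hc rfl
    simp only [mem_finsuppAntidiag, subset_univ, and_true] at hc
    apply h
    rw [← hc, card_eq_sum_ones]
    calc ∑ a ∈ c.support, 1 ≤ ∑ a ∈ c.support, c a :=
          sum_le_sum fun a ha => Nat.one_le_iff_ne_zero.2 (Finsupp.mem_support_iff.1 ha)
      _ ≤ _ := sum_le_sum_of_subset (subset_univ _)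

/-- If, for every `n ≥ 1`, two families of finite sets carry equally many positive integer
weightings of total weight `n`, then they have equally many members of each size `n ≥ 1`:
the counts are related by a triangular system with ones on the diagonal. -/
theorem card_eq_of_card_weights_eq {α : Type*} [Fintype α] [DecidableEq α]
    (S₁ S₂ : Finset (Finset α))
    (h : ∀ n, 1 ≤ n → #{c ∈ (univ : Finset α).finsuppAntidiag n | c.support ∈ S₁} =
      #{c ∈ (univ : Finset α).finsuppAntidiag n | c.support ∈ S₂})
    (n : ℕ) (hn : 1 ≤ n) : #{F ∈ S₁ | #F = n} = #{F ∈ S₂ | #F = n} := by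
  have key (S : Finset (Finset α)) (n : ℕ) (hn : 1 ≤ n) :
      #{c ∈ (univ : Finset α).finsuppAntidiag n | c.support ∈ S} =
        ∑ m ∈ Ico 1 n, #{F ∈ S | #F = m} * m.multichoose (n - m) + #{F ∈ S | #F = n} := by
    set g : ℕ → ℕ := fun m => if m ≤ n then m.multichoose (n - m) else 0 with hg
    have h1 : #{c ∈ (univ : Finset α).finsuppAntidiag n | c.support ∈ S} = ∑ F ∈ S, g #F := by
      rw [card_eq_sum_card_fiberwise (f := fun c : α →₀ ℕ => c.support) (t := S)
        (fun c hc => mem_coe.2 (mem_filter.1 (mem_coe.1 hc)).2)]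
      refine sum_congr rfl fun F hF => ?_
      refine Eq.trans ?_ (card_support_eq_fiber F n)
      rw [filter_filter]
      congr 1
      refine filter_congr fun c _ => ?_
      constructor
      · exact fun h => h.2
      · rintro rfl; exact ⟨hF, rfl⟩
    have h2 : ∑ F ∈ S, g #F = ∑ F ∈ S with #F ∈ Ico 1 (n + 1), g #F := by
      rw [sum_filter]
      refine sum_congr rfl fun F _ => ?_
      split_ifs with hF
      · rfl
      · rw [mem_Ico] at hF
        simp only [hg]
        split_ifs with hle
        · have h0 : #F = 0 := by omega
          obtain ⟨k, rfl⟩ : ∃ k, n = k + 1 := ⟨n - 1, by omega⟩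
          rw [h0]; simp
        · rfl
    rw [h1, h2, ← sum_fiberwise_of_maps_to (g := fun F : Finset α => #F) (t := Ico 1 (n + 1))
      (fun F hF => (mem_filter.1 hF).2)]
    have h3 : ∀ m ∈ Ico 1 (n + 1),
        ∑ F ∈ {F ∈ S | #F ∈ Ico 1 (n + 1)} with #F = m, g #F = #{F ∈ S | #F = m} * g m := by
      intro m hm
      rw [filter_filter, sum_congr rfl (g := fun _ => g m)
        (fun F hF => by rw [(mem_filter.1 hF).2.2]), sum_const, smul_eq_mul]
      congr 2
      refine filter_congr fun F _ => ?_
      constructor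
      · exact fun h => h.2
      · rintro rfl; exact ⟨hm, rfl⟩
    rw [sum_congr rfl h3, sum_Ico_succ_top hn]
    congr 1
    · refine sum_congr rfl fun m hm => ?_
      rw [mem_Ico] at hm
      simp [hg, hm.2.le]
    · simp [hg]
  induction n using Nat.strong_induction_on with
  | _ n ih =>
    have := h n hn
    rw [key S₁ n hn, key S₂ n hn, sum_congr rfl (fun m hm => by
      rw [ih m (mem_Ico.1 hm).2 (mem_Ico.1 hm).1])] at this
    exact Nat.add_left_cancel this

/-! ### Coefficients with respect to a forest -/

theorem graphOf_adj_of_mem {E V : Type*} {F : Set (E × V)} {p : E × V} (hp : p ∈ F) :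
    (graphOf F).Adj (Sum.inl p.1) (Sum.inr p.2) := by
  simp only [graphOf, SimpleGraph.fromRel_adj]
  exact ⟨by simp, Or.inl ⟨p, hp, rfl, rfl⟩⟩

theorem graphOf_mono {E V : Type*} {F F' : Set (E × V)} (h : F ⊆ F') : graphOf F ≤ graphOf F' := by
  intro x y hxy
  simp only [graphOf, SimpleGraph.fromRel_adj] at hxy ⊢
  obtain ⟨hne, ⟨p, hp, h1⟩ | ⟨p, hp, h1⟩⟩ := hxy
  · exact ⟨hne, Or.inl ⟨p, h hp, h1⟩⟩
  · exact ⟨hne, Or.inr ⟨p, h hp, h1⟩⟩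

section

variable {E V : Type*} [Fintype E] [Fintype V] [DecidableEq E] [DecidableEq V]

theorem sum_mul_pt (ε : E ⊕ V → ℝ) (c : E × V → ℝ) :
    ∑ w, ε w * (∑ p, c p • pt p) w = ∑ p, c p * (ε (Sum.inl p.1) + ε (Sum.inr p.2)) := by
  have hpt (p : E × V) : ∑ w, ε w * pt p w = ε (Sum.inl p.1) + ε (Sum.inr p.2) := by
    simp [pt, mul_add, sum_add_distrib]
  simp only [WithLp.ofLp_sum, Finset.sum_apply, WithLp.ofLp_smul, Pi.smul_apply, smul_eq_mul,
    mul_sum]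
  rw [sum_comm]
  refine sum_congr rfl fun p _ => ?_
  rw [← hpt, mul_sum]
  exact sum_congr rfl fun w _ => by ring

/-- Unimodularity of forests: if the coordinates of `∑ c p • pt p` lie in a subgroup `H` of `ℝ`
and `c` is supported on a forest, then all the coefficients lie in `H`. Deleting the edge `p`
disconnects its endpoints; the signed sum of the coordinates over the component of one endpoint
(plus on `E`, minus on `V`) cancels every other edge and leaves `c p`.
The case `H = ⊥` is affine independence, the case `H = ℤ` is integrality. -/
theorem coeff_mem_of_isAcyclic (H : AddSubgroup ℝ) {F : Finset (E × V)}
    (hF : (graphOf (F : Set (E × V))).IsAcyclic) {c : E × V → ℝ}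
    (hc : ∀ p, p ∉ F → c p = 0) (hH : ∀ w, (∑ p, c p • pt p) w ∈ H) (p : E × V) : c p ∈ H := by
  classical
  by_cases hp : p ∈ F
  swap
  · rw [hc p hp]; exact H.zero_mem
  have hb := SimpleGraph.isAcyclic_iff_forall_adj_isBridge.1 hF
    (graphOf_adj_of_mem (F := (F : Set (E × V))) (mem_coe.2 hp))
  rw [SimpleGraph.isBridge_iff] at hb
  set K := (graphOf (F : Set (E × V))).deleteEdges {s(Sum.inl p.1, Sum.inr p.2)} with hK
  set S : E ⊕ V → Prop := fun w => K.Reachable (Sum.inl p.1) w with hS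
  set ε : E ⊕ V → ℝ := fun w => if S w then Sum.elim (fun _ => 1) (fun _ => -1) w else 0 with hε
  have hother (q : E × V) (hq : q ∈ F) (hqp : q ≠ p) :
      S (Sum.inl q.1) ↔ S (Sum.inr q.2) := by
    have hadj : K.Adj (Sum.inl q.1) (Sum.inr q.2) := by
      rw [hK, SimpleGraph.deleteEdges_adj]
      refine ⟨graphOf_adj_of_mem (mem_coe.2 hq), ?_⟩
      simpa [Prod.ext_iff] using hqp
    exact ⟨fun h => h.trans hadj.reachable, fun h => h.trans hadj.symm.reachable⟩
  have hval : ∑ w, ε w * (∑ p, c p • pt p) w = c p := by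
    rw [sum_mul_pt, sum_eq_single p]
    · have h1 : S (Sum.inl p.1) := SimpleGraph.Reachable.refl _
      have h2 : ¬ S (Sum.inr p.2) := hb
      simp [hε, h1, h2]
    · intro q _ hqp
      by_cases hq : q ∈ F
      · have := hother q hq hqp
        by_cases h1 : S (Sum.inr q.2) <;> simp [hε, this, h1]
      · simp [hc q hq]
    · simp
  rw [← hval]
  refine H.sum_mem fun w _ => ?_
  rcases w with w | w <;> simp only [hε] <;> split_ifs
  · simpa using hH _
  · simp
  · simpa using H.neg_mem (hH _)
  · simp

theorem coeff_unique_of_isAcyclic {F : Finset (E × V)}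
    (hF : (graphOf (F : Set (E × V))).IsAcyclic) {c d : E × V → ℝ}
    (hc : ∀ p, p ∉ F → c p = 0) (hd : ∀ p, p ∉ F → d p = 0)
    (h : ∑ p, c p • pt p = ∑ p, d p • pt p) : c = d := by
  ext p
  have := coeff_mem_of_isAcyclic ⊥ hF (c := fun p => c p - d p)
    (fun p hp => by simp [hc p hp, hd p hp])
    (fun w => by simp only [sub_smul, sum_sub_distrib, h]; simp) p
  exact sub_eq_zero.1 (AddSubgroup.mem_bot.1 this)

theorem mem_convexHull_pt_iff (F : Finset (E × V)) (x : EuclideanSpace ℝ (E ⊕ V)) :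
    x ∈ convexHull ℝ (pt '' (F : Set (E × V))) ↔
      ∃ c : E × V → ℝ, (∀ p, 0 ≤ c p) ∧ (∀ p, p ∉ F → c p = 0) ∧ ∑ p, c p = 1 ∧
        ∑ p, c p • pt p = x := by
  constructor
  · have hconv : Convex ℝ {x : EuclideanSpace ℝ (E ⊕ V) | ∃ c : E × V → ℝ, (∀ p, 0 ≤ c p) ∧
        (∀ p, p ∉ F → c p = 0) ∧ ∑ p, c p = 1 ∧ ∑ p, c p • pt p = x} := by
      rintro _ ⟨c, hc0, hcF, hc1, rfl⟩ _ ⟨d, hd0, hdF, hd1, rfl⟩ a b ha hb hab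
      refine ⟨fun p => a * c p + b * d p, fun p => ?_, fun p hp => ?_, ?_, ?_⟩
      · have := hc0 p; have := hd0 p; positivity
      · simp [hcF p hp, hdF p hp]
      · rw [sum_add_distrib, ← mul_sum, ← mul_sum, hc1, hd1]; linarith
      · simp only [add_smul, mul_smul, sum_add_distrib, smul_sum]
    refine fun hx => convexHull_min ?_ hconv hx
    rintro _ ⟨p, hp, rfl⟩
    refine ⟨Pi.single p 1, fun q => ?_, fun q hq => ?_, by simp, ?_⟩
    · by_cases h : q = p
      · subst h; simp
      · simp [h]
    · have : q ≠ p := by rintro rfl; exact hq hp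
      simp [this]
    · rw [sum_eq_single p] <;> simp +contextual
  · rintro ⟨c, hc0, hcF, hc1, rfl⟩
    rw [← sum_subset (subset_univ F) fun p _ hp => by rw [hcF p hp, zero_smul]]
    rw [← sum_subset (subset_univ F) fun p _ hp => hcF p hp] at hc1
    exact (convex_convexHull ℝ _).sum_mem (fun p _ => hc0 p) hc1
      fun p hp => subset_convexHull ℝ _ ⟨p, hp, rfl⟩

/-! ### Lattice points of the dilated root polytope -/

/-- The lattice points of the `n`-th dilate of the root polytope, for `n ≥ 1`; membership in
the dilate is expressed by rescaling the point. -/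
def latticePts (A : Finset (E × V)) (n : ℕ) : Set (EuclideanSpace ℝ (E ⊕ V)) :=
  {x | (∀ w, x w ∈ (Int.castAddHom ℝ).range) ∧
    (n : ℝ)⁻¹ • x ∈ convexHull ℝ (pt '' (A : Set (E × V)))}

/-- For `n ≥ 1`, every lattice point of the `n`-th dilate is a combination of the edges of a unique
face of the triangulation with positive integer coefficients, which are unique and sum to `n`. -/
theorem card_weights_eq_ncard_latticePts {A : Finset (E × V)} {T : Finset (Finset (E × V))}
    (hT : IsTriangulation A T) {n : ℕ} (hn : 1 ≤ n) :
    #{c ∈ (univ : Finset (E × V)).finsuppAntidiag n |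
      c.support ∈ (univ : Finset (Finset (E × V))).filter fun F => ∃ Γ ∈ T, F ⊆ Γ} =
      (latticePts A n).ncard := by
  obtain ⟨hTree, hCover, hInter⟩ := hT
  have hn0 : (n : ℝ) ≠ 0 := by positivity
  set φ : (E × V →₀ ℕ) → EuclideanSpace ℝ (E ⊕ V) := fun c => ∑ p, (c p : ℝ) • pt p with hφ
  have hscale (c : E × V →₀ ℕ) : (n : ℝ)⁻¹ • φ c = ∑ p, ((n : ℝ)⁻¹ * c p) • pt p := by
    simp only [hφ, smul_sum, mul_smul]
  have hmem (c : E × V →₀ ℕ) (hc : ∑ p, c p = n) (Γ : Finset (E × V)) (hΓ : c.support ⊆ Γ) :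
      (n : ℝ)⁻¹ • φ c ∈ convexHull ℝ (pt '' (Γ : Set (E × V))) := by
    rw [mem_convexHull_pt_iff]
    refine ⟨fun p => (n : ℝ)⁻¹ * c p, fun p => by positivity, fun p hp => ?_, ?_, (hscale c).symm⟩
    · simp [Finsupp.notMem_support_iff.1 fun h => hp (hΓ h)]
    · rw [← mul_sum, ← Nat.cast_sum, hc, inv_mul_cancel₀ hn0]
  set C := {c ∈ (univ : Finset (E × V)).finsuppAntidiag n |
      c.support ∈ (univ : Finset (Finset (E × V))).filter fun F => ∃ Γ ∈ T, F ⊆ Γ} with hC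
  have hCmem (c : E × V →₀ ℕ) : c ∈ C ↔ ∑ p, c p = n ∧ ∃ Γ ∈ T, c.support ⊆ Γ := by
    simp [hC]
  have hinj : Set.InjOn φ C := by
    intro c hc d hd hcd
    obtain ⟨hcn, Γ, hΓ, hcΓ⟩ := (hCmem c).1 hc
    obtain ⟨hdn, Δ, hΔ, hdΔ⟩ := (hCmem d).1 hd
    have hx : (n : ℝ)⁻¹ • φ c ∈ convexHull ℝ (pt '' ((Γ ∩ Δ : Finset (E × V)) : Set (E × V))) := by
      rw [← hInter Γ hΓ Δ hΔ]
      exact ⟨hmem c hcn Γ hcΓ, hcd ▸ hmem d hdn Δ hdΔ⟩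
    -- The coefficients `b` on the common face agree with those of `c` and with those of `d`.
    obtain ⟨b, -, hb, -, hbx⟩ := (mem_convexHull_pt_iff _ _).1 hx
    have hcb := coeff_unique_of_isAcyclic (hTree Γ hΓ).2.isAcyclic
      (c := fun p => (n : ℝ)⁻¹ * c p) (d := b)
      (fun p hp => by simp [Finsupp.notMem_support_iff.1 fun h => hp (hcΓ h)])
      (fun p hp => hb p fun h => hp (mem_inter.1 h).1) (by rw [hbx, hscale])
    have hdb := coeff_unique_of_isAcyclic (hTree Δ hΔ).2.isAcyclic
      (c := fun p => (n : ℝ)⁻¹ * d p) (d := b)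
      (fun p hp => by simp [Finsupp.notMem_support_iff.1 fun h => hp (hdΔ h)])
      (fun p hp => hb p fun h => hp (mem_inter.1 h).2) (by rw [hbx, hcd, hscale])
    ext p
    have := congrFun (hcb.trans hdb.symm) p
    exact_mod_cast mul_left_cancel₀ (inv_ne_zero hn0) this
  have himg : φ '' C = latticePts A n := by
    ext x
    constructor
    · rintro ⟨c, hc, rfl⟩
      obtain ⟨hcn, Γ, hΓ, hcΓ⟩ := (hCmem c).1 hc
      refine ⟨fun w => ?_, hmem c hcn A (hcΓ.trans (hTree Γ hΓ).1)⟩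
      simp only [hφ, WithLp.ofLp_sum, Finset.sum_apply, WithLp.ofLp_smul, Pi.smul_apply]
      refine AddSubgroup.sum_mem _ fun p _ => ?_
      rw [Nat.cast_smul_eq_nsmul]
      refine AddSubgroup.nsmul_mem _ ?_ _
      refine ⟨(if w = Sum.inl p.1 then 1 else 0) + (if w = Sum.inr p.2 then 1 else 0), ?_⟩
      simp [pt]
    · rintro ⟨hxZ, hxA⟩
      rw [hCover] at hxA
      simp only [Set.mem_iUnion] at hxA
      obtain ⟨Γ, hΓ, hx⟩ := hxA
      obtain ⟨b, hb0, hbΓ, hb1, hbx⟩ := (mem_convexHull_pt_iff _ _).1 hx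
      have hbx' : ∑ p, (n * b p) • pt p = x := by
        simp only [mul_smul, ← smul_sum, hbx]
        rw [smul_smul, mul_inv_cancel₀ hn0, one_smul]
      have hint := coeff_mem_of_isAcyclic (Int.castAddHom ℝ).range (hTree Γ hΓ).2.isAcyclic
        (c := fun p => n * b p) (fun p hp => by simp [hbΓ p hp]) (by rw [hbx']; exact hxZ)
      have hnat (p : E × V) : ∃ m : ℕ, (m : ℝ) = n * b p := by
        obtain ⟨z, hz⟩ := hint p
        have hz' : (z : ℝ) = n * b p := hz
        have : 0 ≤ z := by
          have h0 : (0 : ℝ) ≤ z := hz' ▸ mul_nonneg n.cast_nonneg (hb0 p)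
          exact_mod_cast h0
        lift z to ℕ using this
        exact ⟨z, by exact_mod_cast hz'⟩
      choose m hm using hnat
      refine ⟨Finsupp.equivFunOnFinite.symm m, ?_, ?_⟩
      · refine (hCmem _).2 ⟨?_, Γ, hΓ, fun p hp => ?_⟩
        · have : ((∑ p, m p : ℕ) : ℝ) = n := by
            rw [Nat.cast_sum, sum_congr rfl fun p _ => hm p, ← mul_sum, hb1, mul_one]
          exact_mod_cast this
        · by_contra h
          have h0 := hm p
          rw [hbΓ p h, mul_zero] at h0
          exact Finsupp.mem_support_iff.1 hp (by exact_mod_cast h0)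
      · simp only [hφ, Finsupp.equivFunOnFinite_symm_apply_apply, hm, hbx']
  rw [← himg, hinj.ncard_image, Set.ncard_coe_finset]

end

/-- Any two triangulations of the root polytope of a connected bipartite graph have the
same f-vector: for each `k`, the number of `(k+1)`-edge forests contained in some
spanning tree of the first triangulation equals the corresponding number for the second
triangulation. -/
theorem fvector_triangulation_invariant {E V : Type*} [Fintype E] [Fintype V]
    [DecidableEq E] [DecidableEq V] (A : Finset (E × V))
    (hconn : (graphOf (↑A : Set (E × V))).Connected)
    (T₁ T₂ : Finset (Finset (E × V)))
    (h₁ : IsTriangulation A T₁) (h₂ : IsTriangulation A T₂) (k : ℕ) :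
    {F : Finset (E × V) | F ⊆ A ∧ (graphOf (↑F : Set (E × V))).IsAcyclic ∧
        F.card = k + 1 ∧ ∃ Γ ∈ T₁, F ⊆ Γ}.ncard
      = {F : Finset (E × V) | F ⊆ A ∧ (graphOf (↑F : Set (E × V))).IsAcyclic ∧
        F.card = k + 1 ∧ ∃ Γ ∈ T₂, F ⊆ Γ}.ncard := by
  have main (T : Finset (Finset (E × V))) (hT : IsTriangulation A T) :
      {F : Finset (E × V) | F ⊆ A ∧ (graphOf (↑F : Set (E × V))).IsAcyclic ∧
        F.card = k + 1 ∧ ∃ Γ ∈ T, F ⊆ Γ}.ncard =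
      #{F ∈ (univ : Finset (Finset (E × V))).filter fun F => ∃ Γ ∈ T, F ⊆ Γ | #F = k + 1} := by
    rw [← Set.ncard_coe_finset]
    congr 1
    ext F
    simp only [Set.mem_ofPred_eq, coe_filter, mem_filter, mem_univ, true_and]
    constructor
    · rintro ⟨-, -, h, h'⟩
      exact ⟨h', h⟩
    · rintro ⟨⟨Γ, hΓ, hF⟩, h⟩
      obtain ⟨hΓA, hΓt⟩ := hT.1 Γ hΓ
      exact ⟨hF.trans hΓA, hΓt.isAcyclic.anti (graphOf_mono (coe_subset.2 hF)), h, Γ, hΓ, hF⟩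
  rw [main T₁ h₁, main T₂ h₂]
  refine card_eq_of_card_weights_eq _ _ (fun n hn => ?_) (k + 1) (by omega)
  rw [card_weights_eq_ncard_latticePts h₁ hn, card_weights_eq_ncard_latticePts h₂ hn]
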